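/- Let A be a Nakayama algebra and S a simple module. If e(S) = 2t, then h(S) = γ^t(φ(S)), where φ(S) = top(IS); if e(S) = 2t+1, then h(S) = γ^t(τ S). -/

import Mathlib

open CategoryTheory CategoryTheory.Limits

noncomputable section

namespace ArtinAlg

variable (A : Type) [Ring A]

/-- `M` admits a projective resolution of length at most `n`. -/
inductive ProjDimLE : ℕ → ModuleCat.{0} A → Prop
  | zero (M : ModuleCat.{0} A) (h : Projective M) : ProjDimLE 0 M
  | succ (n : ℕ) (M P : ModuleCat.{0} A) (f : P ⟶ M) (hP : Projective P) (hf : Epi f)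
      (h : ProjDimLE n (kernel f)) : ProjDimLE (n + 1) M

/-- `M` admits an injective coresolution of length at most `n`. -/
inductive InjDimLE : ℕ → ModuleCat.{0} A → Prop
  | zero (M : ModuleCat.{0} A) (h : Injective M) : InjDimLE 0 M
  | succ (n : ℕ) (M I : ModuleCat.{0} A) (f : M ⟶ I) (hI : Injective I) (hf : Mono f)
      (h : InjDimLE n (cokernel f)) : InjDimLE (n + 1) M

/-- The projective dimension `pd M ∈ ℕ∞`. -/
def projDim (M : ModuleCat.{0} A) : ℕ∞ :=
  sInf {d : ℕ∞ | ∃ n : ℕ, d = n ∧ ProjDimLE A n M}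

/-- The injective dimension `id M ∈ ℕ∞`. -/
def injDim (M : ModuleCat.{0} A) : ℕ∞ :=
  sInf {d : ℕ∞ | ∃ n : ℕ, d = n ∧ InjDimLE A n M}

/-- `f : P ⟶ M` is a projective cover: `P` is projective and `f` is an essential
(superfluous) epimorphism. -/
def IsProjectiveCoverHom {P M : ModuleCat.{0} A} (f : P ⟶ M) : Prop :=
  Projective P ∧ Epi f ∧ ∀ (N : ModuleCat.{0} A) (g : N ⟶ P), Epi (g ≫ f) → Epi g

/-- `P` is a projective cover of `M`. -/
def IsProjCoverOf (M P : ModuleCat.{0} A) : Prop :=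
  ∃ f : P ⟶ M, IsProjectiveCoverHom A f

/-- `f : M ⟶ I` is an injective envelope: `I` is injective and `f` is an essential
monomorphism. -/
def IsInjectiveEnvelopeHom {M I : ModuleCat.{0} A} (f : M ⟶ I) : Prop :=
  Injective I ∧ Mono f ∧ ∀ (N : ModuleCat.{0} A) (g : I ⟶ N), Mono (f ≫ g) → Mono g

/-- `I` is an injective envelope of `M`. -/
def IsInjEnvOf (M I : ModuleCat.{0} A) : Prop :=
  ∃ f : M ⟶ I, IsInjectiveEnvelopeHom A f

/-- `X ≅ Ω M`, the kernel of a projective cover of `M`. -/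
def IsSyzygyOf (M X : ModuleCat.{0} A) : Prop :=
  ∃ (P : ModuleCat.{0} A) (f : P ⟶ M), IsProjectiveCoverHom A f ∧ Nonempty (X ≅ kernel f)

/-- `X ≅ Σ M`, the cokernel of an injective envelope of `M`. -/
def IsCosyzygyOf (M X : ModuleCat.{0} A) : Prop :=
  ∃ (I : ModuleCat.{0} A) (f : M ⟶ I), IsInjectiveEnvelopeHom A f ∧ Nonempty (X ≅ cokernel f)

/-- `X ≅ Ω^n M`. -/
def IsNthSyzygy : ℕ → ModuleCat.{0} A → ModuleCat.{0} A → Prop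
  | 0, M, X => Nonempty (X ≅ M)
  | n + 1, M, X => ∃ Y, IsSyzygyOf A M Y ∧ IsNthSyzygy n Y X

/-- `X ≅ Σ^n M`. -/
def IsNthCosyzygy : ℕ → ModuleCat.{0} A → ModuleCat.{0} A → Prop
  | 0, M, X => Nonempty (X ≅ M)
  | n + 1, M, X => ∃ Y, IsCosyzygyOf A M Y ∧ IsNthCosyzygy n Y X

/-- `X` is a direct summand of `Y`. -/
def IsDirectSummandOf (X Y : ModuleCat.{0} A) : Prop :=
  ∃ (i : X ⟶ Y) (r : Y ⟶ X), i ≫ r = 𝟙 X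

/-- `X ∈ add W` : `X` is a direct summand of a finite direct sum of copies of `W`. -/
def InAdd (X W : ModuleCat.{0} A) : Prop :=
  ∃ n : ℕ, IsDirectSummandOf A X (ModuleCat.of A (Fin n → ↥W))

/-- The delooping level of `M` is at most `d` :
`Ω^d M ∈ add (A ⊕ Ω^{d+1} M')` for some finitely generated `M'`. -/
def DelLE (d : ℕ) (M : ModuleCat.{0} A) : Prop :=
  ∃ X, IsNthSyzygy A d M X ∧
    ∃ M' : ModuleCat.{0} A, Module.Finite A ↥M' ∧
      ∃ X', IsNthSyzygy A (d + 1) M' X' ∧ InAdd A X (ModuleCat.of A (A × ↥X'))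

/-- The delooping level `del M ∈ ℕ∞`. -/
def delLevel (M : ModuleCat.{0} A) : ℕ∞ :=
  sInf {d : ℕ∞ | ∃ n : ℕ, d = n ∧ DelLE A n M}

/-- The delooping level of the algebra: the supremum of `del S` over the simple modules. -/
def delAlg : ℕ∞ :=
  sSup {d : ℕ∞ | ∃ S : ModuleCat.{0} A, IsSimpleModule A ↥S ∧ delLevel A S = d}

/-- `Q` is a minimal injective cogenerator: the injective envelope of the direct sum of
a complete set of representatives of the simple modules. -/
def IsMinimalInjectiveCogenerator (Q : ModuleCat.{0} A) : Prop :=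
  ∃ (ι : Type) (_ : Fintype ι) (S : ι → ModuleCat.{0} A),
    (∀ i, IsSimpleModule A ↥(S i)) ∧
    (∀ T : ModuleCat.{0} A, IsSimpleModule A ↥T → ∃! i, Nonempty (↥T ≃ₗ[A] ↥(S i))) ∧
    IsInjEnvOf A (ModuleCat.of A (∀ i, ↥(S i))) Q

/-- The desuspending level of `M` is at most `d` :
`Σ^d M ∈ add (D(A) ⊕ Σ^{d+1} M')` for some finitely generated `M'`. -/
def DesLE (d : ℕ) (M : ModuleCat.{0} A) : Prop :=
  ∃ X, IsNthCosyzygy A d M X ∧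
    ∃ Q, IsMinimalInjectiveCogenerator A Q ∧
      ∃ M' : ModuleCat.{0} A, Module.Finite A ↥M' ∧
        ∃ X', IsNthCosyzygy A (d + 1) M' X' ∧ InAdd A X (ModuleCat.of A (↥Q × ↥X'))

/-- The desuspending level `des M ∈ ℕ∞`. -/
def desLevel (M : ModuleCat.{0} A) : ℕ∞ :=
  sInf {d : ℕ∞ | ∃ n : ℕ, d = n ∧ DesLE A n M}

/-- The desuspending level of the algebra. -/
def desAlg : ℕ∞ :=
  sSup {d : ℕ∞ | ∃ S : ModuleCat.{0} A, IsSimpleModule A ↥S ∧ desLevel A S = d}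

/-- The (small) finitistic projective dimension `fin-pro A`. -/
def finProDim : ℕ∞ :=
  sSup {d : ℕ∞ | ∃ M : ModuleCat.{0} A, Module.Finite A ↥M ∧ projDim A M = d ∧ d ≠ ⊤}

/-- The (small) finitistic injective dimension `fin-inj A`. -/
def finInjDim : ℕ∞ :=
  sSup {d : ℕ∞ | ∃ M : ModuleCat.{0} A, Module.Finite A ↥M ∧ injDim A M = d ∧ d ≠ ⊤}

/-- The big finitistic projective dimension `Fin-pro A`. -/
def bigFinProDim : ℕ∞ :=
  sSup {d : ℕ∞ | ∃ M : ModuleCat.{0} A, projDim A M = d ∧ d ≠ ⊤}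

/-- The big finitistic injective dimension `Fin-inj A`. -/
def bigFinInjDim : ℕ∞ :=
  sSup {d : ℕ∞ | ∃ M : ModuleCat.{0} A, injDim A M = d ∧ d ≠ ⊤}

/-- `M` is an indecomposable nonzero module. -/
def Indec (M : ModuleCat.{0} A) : Prop :=
  Nontrivial ↥M ∧ ∀ (N₁ N₂ : Submodule A ↥M), IsCompl N₁ N₂ → N₁ = ⊥ ∨ N₂ = ⊥

/-- `M` is serial (uniserial): its submodules form a chain. -/
def IsUniserial (M : ModuleCat.{0} A) : Prop :=
  ∀ N₁ N₂ : Submodule A ↥M, N₁ ≤ N₂ ∨ N₂ ≤ N₁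

/-- `A` is a Nakayama algebra: all finitely generated indecomposable modules are serial. -/
def IsNakayama : Prop :=
  ∀ M : ModuleCat.{0} A, Module.Finite A ↥M → Indec A M → IsUniserial A M

/-- `A` is connected: it is not a nontrivial product of algebras. -/
def IsConnectedAlgebra : Prop :=
  Nontrivial A ∧ ∀ e : A, IsIdempotentElem e → e ∈ Set.center A → e = 0 ∨ e = 1

/-- `A` is a cyclic Nakayama algebra: connected Nakayama with no simple projective module. -/
def IsCyclicNakayama : Prop :=
  IsNakayama A ∧ IsConnectedAlgebra A ∧
    ¬ ∃ S : ModuleCat.{0} A, IsSimpleModule A ↥S ∧ Projective S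

/-- `T ≅ top M` (and `top M` is simple): there is an essential epimorphism `M ⟶ T`. -/
def IsSimpleTopOf (M T : ModuleCat.{0} A) : Prop :=
  IsSimpleModule A ↥T ∧
    ∃ f : M ⟶ T, Epi f ∧ ∀ (N : ModuleCat.{0} A) (g : N ⟶ M), Epi (g ≫ f) → Epi g

/-- `S ≅ soc M` (and `soc M` is simple): there is an essential monomorphism `S ⟶ M`. -/
def IsSimpleSocOf (M S : ModuleCat.{0} A) : Prop :=
  IsSimpleModule A ↥S ∧
    ∃ f : S ⟶ M, Mono f ∧ ∀ (N : ModuleCat.{0} A) (g : M ⟶ N), Mono (f ≫ g) → Mono g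

/-- `0 ⟶ N ⟶ E ⟶ M ⟶ 0` is an almost split (Auslander-Reiten) sequence. -/
def IsAlmostSplitSeq {N E M : ModuleCat.{0} A} (f : N ⟶ E) (g : E ⟶ M) : Prop :=
  Mono f ∧ Epi g ∧ (∃ w : f ≫ g = 0, (ShortComplex.mk f g w).Exact) ∧
  (¬ ∃ s : M ⟶ E, s ≫ g = 𝟙 M) ∧ Indec A N ∧ Indec A M ∧
  ∀ (X : ModuleCat.{0} A) (h : X ⟶ M), (¬ ∃ s : M ⟶ X, s ≫ h = 𝟙 M) → ∃ h' : X ⟶ E, h' ≫ g = h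

/-- `N ≅ τ M`, the Auslander-Reiten translate of `M` : there is an almost split sequence
`0 ⟶ N ⟶ E ⟶ M ⟶ 0`. -/
def IsTauOf (N M : ModuleCat.{0} A) : Prop :=
  ∃ (E : ModuleCat.{0} A) (f : N ⟶ E) (g : E ⟶ M), IsAlmostSplitSeq A f g

/-- `U ≅ ψ S = τ⁻ top (I S)`. -/
def IsPsiOf (S U : ModuleCat.{0} A) : Prop :=
  ∃ I, IsInjEnvOf A S I ∧ ∃ T, IsSimpleTopOf A I T ∧ IsTauOf A T U

/-- `T ≅ γ S = τ soc (P S)`. -/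
def IsGammaOf (S T : ModuleCat.{0} A) : Prop :=
  ∃ P, IsProjCoverOf A S P ∧ ∃ U, IsSimpleSocOf A P U ∧ IsTauOf A T U

/-- `T ≅ φ S = top (I S)`. -/
def IsPhiOf (S T : ModuleCat.{0} A) : Prop :=
  ∃ I, IsInjEnvOf A S I ∧ IsSimpleTopOf A I T

/-- There is a `ψ`-path `(S_1, …, S_m)` of cardinality `m` ending in `S`. -/
def PsiPathTo (m : ℕ) (S : ModuleCat.{0} A) : Prop :=
  1 ≤ m ∧ ∃ c : ℕ → ModuleCat.{0} A,
    (∀ i < m, IsSimpleModule A ↥(c i)) ∧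
    (∀ i, i + 1 < m → IsPsiOf A (c i) (c (i + 1))) ∧
    Nonempty (c (m - 1) ≅ S)

/-- `a(S)`: the supremum of the cardinalities of `ψ`-paths ending in `S`. -/
def aVal (S : ModuleCat.{0} A) : ℕ∞ :=
  sSup {d : ℕ∞ | ∃ m : ℕ, d = m ∧ PsiPathTo A m S}

/-- `a(A)`: the maximum of `a(S)` over the simple modules which are not `ψ`-cyclic. -/
def aAlg : ℕ∞ :=
  sSup {d : ℕ∞ | ∃ S : ModuleCat.{0} A, IsSimpleModule A ↥S ∧ aVal A S ≠ ⊤ ∧ aVal A S = d}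

/-- `S` is a composition factor of `M`: a simple subquotient of `M`. -/
def IsCompFactorOf (S M : ModuleCat.{0} A) : Prop :=
  IsSimpleModule A ↥S ∧ ∃ N' N : Submodule A ↥M, N' ≤ N ∧
    Nonempty ((↥N ⧸ N'.comap N.subtype) ≃ₗ[A] ↥S)

/-- `e(S) = min {pd S, pd (I S)} = x`. -/
def ERelVal (S : ModuleCat.{0} A) (x : ℕ∞) : Prop :=
  ∃ I, IsInjEnvOf A S I ∧ x = min (projDim A S) (projDim A I)

/-- `e*(S) = min {id S, id (P S)} = x`. -/
def EStarVal (S : ModuleCat.{0} A) (x : ℕ∞) : Prop :=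
  ∃ P, IsProjCoverOf A S P ∧ x = min (injDim A S) (injDim A P)

/-- `T = h(S) = top (Ω^{e(S)} N S)`, the homological permutation. -/
def HRel (S T : ModuleCat.{0} A) : Prop :=
  IsSimpleModule A ↥S ∧ IsSimpleModule A ↥T ∧
  ∃ z : ℕ, ERelVal A S z ∧
    ∃ N, ((Odd z ∧ N = S) ∨ (Even z ∧ IsInjEnvOf A S N)) ∧
      ∃ X, IsNthSyzygy A z N X ∧ IsSimpleTopOf A X T

/-- `S = h*(T) = soc (Σ^{e*(T)} N* T)`, the inverse homological permutation. -/
def HStarRel (T S : ModuleCat.{0} A) : Prop :=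
  IsSimpleModule A ↥T ∧ IsSimpleModule A ↥S ∧
  ∃ z : ℕ, EStarVal A T z ∧
    ∃ N, ((Odd z ∧ N = T) ∨ (Even z ∧ IsProjCoverOf A T N)) ∧
      ∃ X, IsNthCosyzygy A z N X ∧ IsSimpleSocOf A X S

/-- The `t`-fold relational iterate of a relation on modules (up to isomorphism). -/
def IterRel (r : ModuleCat.{0} A → ModuleCat.{0} A → Prop) :
    ℕ → ModuleCat.{0} A → ModuleCat.{0} A → Prop
  | 0, X, Y => Nonempty (X ≅ Y)
  | n + 1, X, Y => ∃ Z, r X Z ∧ IterRel r n Z Y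

end ArtinAlg

/-!
Over a Nakayama ring, every short exact sequence `0 → Z → E → V → 0` with `Z`, `V` simple and `E`
uniserial is almost split. For simple `V` and an exact sequence `0 → Y → W → V → 0` with `W`
uniserial and `Y ≠ 0`, factoring out `rad Y` therefore yields `τ V = top Y`.

For `W` the projective cover of a simple module `S`, this reads `τ S = top (Ω S)`. Now let `M` be
uniserial with projective cover `P` and `Ω² M ≠ 0`. The preimage of `soc P ⊆ Ω M` in the projective
cover of `Ω M` is an extension of `soc P` by `Ω² M`, whence `γ (top M) = top (Ω² M)`. By iteration
`γ^t (top M) = top (Ω^{2t} M)` as long as `Ω^{2t} M ≠ 0`, and both formulas follow on taking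
`M = I S` and `M = Ω S`: by minimality in the definition of `e(S)`, the syzygies involved do not
vanish, and `I S` is uniserial because its finitely generated submodules have simple socle and so
are indecomposable.
-/

namespace ArtinAlg

section LinearMap

variable {A M N P E K : Type*} [Ring A] [AddCommGroup M] [Module A M] [AddCommGroup N] [Module A N]
  [AddCommGroup P] [Module A P] [AddCommGroup E] [Module A E] [AddCommGroup K] [Module A K]

theorem exists_comp_eq_of_ker_le {f : M →ₗ[A] N} (hf : Function.Surjective f) {g : M →ₗ[A] P}
    (h : LinearMap.ker f ≤ LinearMap.ker g) : ∃ k : N →ₗ[A] P, k ∘ₗ f = g := by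
  refine ⟨(LinearMap.ker f).liftQ g h ∘ₗ (f.quotKerEquivOfSurjective hf).symm,
    LinearMap.ext fun x => ?_⟩
  have hx : (f.quotKerEquivOfSurjective hf).symm (f x) = (LinearMap.ker f).mkQ x :=
    (LinearEquiv.symm_apply_eq _).2 rfl
  simp only [LinearMap.comp_apply, LinearEquiv.coe_coe, hx, Submodule.mkQ_apply,
    Submodule.liftQ_apply]

theorem exists_comp_eq_of_range_le {f : N →ₗ[A] P} (hf : Function.Injective f) {g : M →ₗ[A] P}
    (h : LinearMap.range g ≤ LinearMap.range f) : ∃ k : M →ₗ[A] N, f ∘ₗ k = g := by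
  refine ⟨(LinearEquiv.ofInjective f hf).symm ∘ₗ
    g.codRestrict (LinearMap.range f) fun x => h ⟨x, rfl⟩, LinearMap.ext fun x => ?_⟩
  exact congrArg Subtype.val ((LinearEquiv.ofInjective f hf).apply_symm_apply ⟨g x, h ⟨x, rfl⟩⟩)

theorem exists_linearMap_on_sup {N₁ N₂ : Submodule A M} (hd : Disjoint N₁ N₂) (k₁ : N₁ →ₗ[A] E)
    (k₂ : N₂ →ₗ[A] E) :
    ∃ k : ↥(N₁ ⊔ N₂) →ₗ[A] E, k ∘ₗ Submodule.inclusion le_sup_left = k₁ ∧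
      k ∘ₗ Submodule.inclusion le_sup_right = k₂ := by
  let f₁ : M →ₗ.[A] E := ⟨N₁, k₁⟩
  let f₂ : M →ₗ.[A] E := ⟨N₂, k₂⟩
  have hd' := LinearPMap.sup_h_of_disjoint f₁ f₂ hd
  exact ⟨(f₁.sup f₂ hd').toFun, LinearMap.ext fun x => ((f₁.left_le_sup f₂ hd').2 rfl).symm,
    LinearMap.ext fun x => ((f₁.right_le_sup f₂ hd').2 rfl).symm⟩

/- If `u + v : P ⊕ K → M` is onto, then `M` is the pushout of `P` and `K` over its kernel. -/
theorem exists_comp_eq_of_agree {u : P →ₗ[A] M} {v : K →ₗ[A] M}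
    (huv : ∀ x, ∃ y z, u y + v z = x) {q : P →ₗ[A] E} {r : K →ₗ[A] E}
    (hqr : ∀ y z, u y = v z → q y = r z) : ∃ k : M →ₗ[A] E, k ∘ₗ u = q ∧ k ∘ₗ v = r := by
  obtain ⟨k, hk⟩ := exists_comp_eq_of_ker_le (f := u.coprod v) (g := q.coprod r)
    (fun x => (huv x).elim fun y ⟨z, hyz⟩ => ⟨(y, z), hyz⟩) (fun x hx => by
      have hu : u x.1 = v (-x.2) := by
        rw [map_neg]
        exact eq_neg_of_add_eq_zero_left hx
      simp only [LinearMap.mem_ker, LinearMap.coprod_apply, hqr _ _ hu, map_neg, neg_add_cancel])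
  exact ⟨k, by rw [← LinearMap.coprod_inl u v, ← LinearMap.comp_assoc, hk, LinearMap.coprod_inl],
    by rw [← LinearMap.coprod_inr u v, ← LinearMap.comp_assoc, hk, LinearMap.coprod_inr]⟩

theorem isCompl_range_ker_of_comp_bijective {f : M →ₗ[A] N} {g : N →ₗ[A] P}
    (h : Function.Bijective (g ∘ₗ f)) : IsCompl (LinearMap.range f) (LinearMap.ker g) := by
  refine ⟨Submodule.disjoint_def.2 ?_, Submodule.codisjoint_iff_exists_add_eq.2 fun x => ?_⟩
  · rintro _ ⟨y, rfl⟩ hy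
    rw [(map_eq_zero_iff (g ∘ₗ f) h.1).1 hy, map_zero]
  · obtain ⟨y, hy⟩ := h.2 (g x)
    exact ⟨f y, x - f y, ⟨y, rfl⟩, LinearMap.sub_mem_ker_iff.2 hy.symm, add_sub_cancel _ _⟩

end LinearMap

section Uniserial

/-- Unbundled form of `IsUniserial`: the submodules of `M` form a chain. -/
def IsUniserialModule (A M : Type*) [Ring A] [AddCommGroup M] [Module A M] : Prop :=
  ∀ N₁ N₂ : Submodule A M, N₁ ≤ N₂ ∨ N₂ ≤ N₁

variable {A M N P S T : Type*} [Ring A] [AddCommGroup M] [Module A M] [AddCommGroup N] [Module A N]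
  [AddCommGroup P] [Module A P] [AddCommGroup S] [Module A S] [AddCommGroup T] [Module A T]

namespace IsUniserialModule

theorem of_injective (hM : IsUniserialModule A M) {f : N →ₗ[A] M} (hf : Function.Injective f) :
    IsUniserialModule A N := fun N₁ N₂ =>
  (hM (N₁.map f) (N₂.map f)).imp (Submodule.map_le_map_iff_of_injective hf _ _).1
    (Submodule.map_le_map_iff_of_injective hf _ _).1

theorem of_surjective (hM : IsUniserialModule A M) {f : M →ₗ[A] N} (hf : Function.Surjective f) :
    IsUniserialModule A N := fun N₁ N₂ =>
  (hM (N₁.comap f) (N₂.comap f)).imp (Submodule.comap_le_comap_iff_of_surjective hf).1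
    (Submodule.comap_le_comap_iff_of_surjective hf).1

theorem of_isSimpleModule [IsSimpleModule A M] : IsUniserialModule A M := fun N₁ _ =>
  (eq_bot_or_eq_top N₁).imp (fun h => h.le.trans bot_le) fun h => le_top.trans h.ge

theorem of_fg (h : ∀ N : Submodule A M, N.FG → IsUniserialModule A N) :
    IsUniserialModule A M := by
  by_contra hM
  simp only [IsUniserialModule, not_forall, not_or, SetLike.not_le_iff_exists] at hM
  obtain ⟨N₁, N₂, ⟨x, hx₁, hx₂⟩, y, hy₂, hy₁⟩ := hM
  have hx : x ∈ Submodule.span A {x, y} := Submodule.subset_span (by simp)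
  have hy : y ∈ Submodule.span A {x, y} := Submodule.subset_span (by simp)
  rcases h _ (Submodule.fg_span (Set.toFinite {x, y})) (N₁.submoduleOf _) (N₂.submoduleOf _)
    with hle | hle
  · exact hx₂ (hle (x := ⟨x, hx⟩) hx₁)
  · exact hy₁ (hle (x := ⟨y, hy⟩) hy₂)

theorem eq_top_of_not_le (hM : IsUniserialModule A M) {L K : Submodule A M} (hL : IsCoatom L)
    (h : ¬ K ≤ L) : K = ⊤ :=
  hL.2 K (lt_of_le_not_ge ((hM K L).resolve_left h) h)

theorem surjective_of_comp (hM : IsUniserialModule A M) [IsSimpleModule A S]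
    {f : M →ₗ[A] S} {p : P →ₗ[A] M} (h : Function.Surjective (f ∘ₗ p)) :
    Function.Surjective p := by
  have := IsSimpleModule.nontrivial A S
  rw [← LinearMap.range_eq_top]
  refine hM.eq_top_of_not_le (LinearMap.isCoatom_ker_of_surjective (.of_comp h)) fun hle => ?_
  obtain ⟨s, hs⟩ := exists_ne (0 : S)
  obtain ⟨x, rfl⟩ := h s
  exact hs (hle ⟨x, rfl⟩)

theorem ker_eq_ker_of_isSimpleModule (hM : IsUniserialModule A M) [IsSimpleModule A S]
    [IsSimpleModule A T] {f : M →ₗ[A] S} {g : M →ₗ[A] T} (hf : Function.Surjective f)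
    (hg : Function.Surjective g) : LinearMap.ker f = LinearMap.ker g := by
  have hf' := LinearMap.isCoatom_ker_of_surjective hf
  have hg' := LinearMap.isCoatom_ker_of_surjective hg
  exact (hM (LinearMap.ker f) (LinearMap.ker g)).elim
    (fun h => ((hf'.le_iff_eq hg'.1).1 h).symm) (hg'.le_iff_eq hf'.1).1

/- The two kernels differ by an endomorphism of `N`, which is injective as `N` is noetherian. -/
theorem ker_eq_ker_of_surjective (hM : IsUniserialModule A M) [IsNoetherian A N]
    {f g : M →ₗ[A] N} (hf : Function.Surjective f) (hg : Function.Surjective g) :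
    LinearMap.ker f = LinearMap.ker g := by
  have key {f g : M →ₗ[A] N} (hf : Function.Surjective f) (hg : Function.Surjective g)
      (h : LinearMap.ker f ≤ LinearMap.ker g) : LinearMap.ker f = LinearMap.ker g := by
    obtain ⟨k, rfl⟩ := exists_comp_eq_of_ker_le hf h
    have hk : Function.Injective k := IsNoetherian.injective_of_surjective_endomorphism k
      (Function.Surjective.of_comp hg)
    rw [LinearMap.ker_comp_of_ker_eq_bot f (LinearMap.ker_eq_bot.2 hk)]
  exact (hM (LinearMap.ker f) (LinearMap.ker g)).elim (key hf hg) fun h => (key hg hf h).symm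

end IsUniserialModule

end Uniserial

section Radical

variable {A M W K Z : Type*} [Ring A] [AddCommGroup M] [Module A M] [AddCommGroup W] [Module A W]
  [AddCommGroup K] [Module A K] [AddCommGroup Z] [Module A Z]

theorem jacobson_le_jacobson_smul_top [IsSemisimpleRing (A ⧸ Ring.jacobson A)] :
    Module.jacobson A M ≤ Ring.jacobson A • (⊤ : Submodule A M) := by
  apply Module.jacobson_le_of_eq_bot
  have htors : Module.IsTorsionBySet A (M ⧸ Ring.jacobson A • (⊤ : Submodule A M))
      (Ring.jacobson A) := by
    rw [Module.isTorsionBySet_quotient_iff]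
    exact fun _ _ hi => Submodule.smul_mem_smul hi trivial
  let _ := htors.module
  have := (htors.semilinearMap.isSemisimpleModule_iff_of_bijective Function.bijective_id).2
    inferInstance
  exact IsSemisimpleModule.jacobson_eq_bot A _

theorem exists_comp_eq_of_not_range_le_jacobson (hW : IsUniserialModule A W) [IsSimpleModule A Z]
    {p : W →ₗ[A] K} (hp : ¬ LinearMap.range p ≤ Module.jacobson A K) (c : W →ₗ[A] Z) :
    ∃ r : K →ₗ[A] Z, r ∘ₗ p = c := by
  rcases c.surjective_or_eq_zero with hc | rfl
  swap
  · exact ⟨0, LinearMap.zero_comp p⟩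
  obtain ⟨L, hL, hpL⟩ : ∃ L : Submodule A K, IsCoatom L ∧ ¬ LinearMap.range p ≤ L := by
    by_contra! h
    exact hp (le_sInf h)
  have := isSimpleModule_iff_isCoatom.2 hL
  have hs : Function.Surjective (L.mkQ ∘ₗ p) := by
    refine (LinearMap.surjective_or_eq_zero _).resolve_right fun h => hpL ?_
    rwa [← LinearMap.range_le_ker_iff, Submodule.ker_mkQ] at h
  obtain ⟨k, hk⟩ := exists_comp_eq_of_ker_le hs (hW.ker_eq_ker_of_isSimpleModule hs hc).le
  exact ⟨k ∘ₗ L.mkQ, hk⟩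

variable [IsSemiprimaryRing A]

theorem exists_isCoatom [Nontrivial M] : ∃ L : Submodule A M, IsCoatom L := by
  by_contra! hL
  have hrad : Ring.jacobson A • (⊤ : Submodule A M) = ⊤ := by
    refine top_le_iff.1 (le_trans ?_ jacobson_le_jacobson_smul_top)
    exact le_sInf fun L h => (hL L h).elim
  have hpow (k : ℕ) : Ring.jacobson A ^ k • (⊤ : Submodule A M) = ⊤ := by
    induction k with
    | zero => rw [Submodule.pow_zero, Ideal.one_eq_top, Submodule.top_smul]
    | succ k ih => rw [Submodule.pow_succ, Submodule.mul_smul, hrad, ih]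
  obtain ⟨n, hn⟩ := IsSemiprimaryRing.isNilpotent (R := A)
  exact bot_ne_top (by rw [← hpow n, hn, Ideal.zero_eq_bot, Submodule.bot_smul])

theorem IsUniserialModule.finite (hM : IsUniserialModule A M) : Module.Finite A M := by
  rcases subsingleton_or_nontrivial M with _ | _
  · infer_instance
  obtain ⟨L, hL⟩ := exists_isCoatom (A := A) (M := M)
  obtain ⟨x, -, hx⟩ := SetLike.exists_of_lt hL.lt_top
  have hspan : Submodule.span A {x} = ⊤ :=
    hM.eq_top_of_not_le hL ((Submodule.span_singleton_le_iff_mem _ _).not.2 hx)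
  exact ⟨⟨{x}, by rwa [Finset.coe_singleton]⟩⟩

theorem exists_fg_mem_jacobson {x : M} (hx : x ∈ Module.jacobson A M) :
    ∃ F : Submodule A M, F.FG ∧ ∃ y ∈ Module.jacobson A F, (y : M) = x := by
  refine Submodule.smul_induction_on (jacobson_le_jacobson_smul_top hx) (fun r hr m _ => ?_)
    fun x₁ x₂ h₁ h₂ => ?_
  · refine ⟨Submodule.span A {m}, Submodule.fg_span_singleton m,
      r • ⟨m, Submodule.mem_span_singleton_self m⟩, ?_, rfl⟩
    exact Ring.jacobson_smul_top_le A _ (Submodule.smul_mem_smul hr trivial)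
  · obtain ⟨F₁, hF₁, y₁, hy₁, rfl⟩ := h₁
    obtain ⟨F₂, hF₂, y₂, hy₂, rfl⟩ := h₂
    refine ⟨F₁ ⊔ F₂, hF₁.sup hF₂,
      Submodule.inclusion le_sup_left y₁ + Submodule.inclusion le_sup_right y₂,
      add_mem ?_ ?_, rfl⟩
    · exact Module.map_jacobson_le (Submodule.inclusion le_sup_left) ⟨y₁, hy₁, rfl⟩
    · exact Module.map_jacobson_le (Submodule.inclusion le_sup_right) ⟨y₂, hy₂, rfl⟩

end Radical

theorem projective_of_projective_sup {A M : Type*} [Ring A] [AddCommGroup M] [Module A M]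
    {N₁ N₂ : Submodule A M} (hd : Disjoint N₁ N₂) [Module.Projective A ↥(N₁ ⊔ N₂)] :
    Module.Projective A N₁ := by
  obtain ⟨k, hk, -⟩ := exists_linearMap_on_sup hd LinearMap.id 0
  exact Module.Projective.of_split _ k hk

section Nakayama

variable {A : Type} [Ring A] [IsArtinianRing A]

theorem IsNakayama.submodule_fg_induction (hA : IsNakayama A) {X : Type} [AddCommGroup X]
    [Module A X] {motive : Submodule A X → Prop}
    (uniserial : ∀ N : Submodule A X, N.FG → IsUniserialModule A N → motive N)
    (sup : ∀ N₁ N₂ : Submodule A X, Disjoint N₁ N₂ → motive N₁ → motive N₂ → motive (N₁ ⊔ N₂))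
    (N : Submodule A X) (hN : N.FG) : motive N := by
  induction hlen : Module.length A N using WellFoundedLT.induction generalizing N with
  | ind n ih =>
  subst hlen
  have := Module.Finite.iff_fg.2 hN
  rcases subsingleton_or_nontrivial N with _ | _
  · exact uniserial N hN fun N₁ N₂ => Or.inl (Subsingleton.elim N₁ N₂).le
  by_cases hind : Indec A (ModuleCat.of A N)
  · exact uniserial N hN (hA (ModuleCat.of A N) this hind)
  obtain ⟨L₁, L₂, hL, hL₁, hL₂⟩ : ∃ L₁ L₂ : Submodule A N, IsCompl L₁ L₂ ∧ L₁ ≠ ⊥ ∧ L₂ ≠ ⊥ := by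
    by_contra! h
    exact hind ⟨‹_›, fun L₁ L₂ hL => or_iff_not_imp_left.2 (h L₁ L₂ hL)⟩
  have hmotive (L : Submodule A N) (hne : L ≠ ⊤) : motive (L.map N.subtype) := by
    refine ih _ ?_ _ ((IsNoetherian.noetherian L).map _) rfl
    rw [← (Submodule.equivSubtypeMap N L).length_eq]
    exact Submodule.length_lt hne
  have hdisj : Disjoint (L₁.map N.subtype) (L₂.map N.subtype) :=
    Submodule.disjoint_map N.subtype_injective hL.disjoint
  have hsup : L₁.map N.subtype ⊔ L₂.map N.subtype = N := by
    rw [← Submodule.map_sup, hL.sup_eq_top, Submodule.map_subtype_top]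
  rw [← hsup]
  exact sup _ _ hdisj (hmotive L₁ fun h => hL₂ (by simpa [h] using hL.disjoint))
    (hmotive L₂ fun h => hL₁ (by simpa [h] using hL.disjoint))

theorem IsNakayama.exists_uniserial_projective (hA : IsNakayama A) (S : Type) [AddCommGroup S]
    [Module A S] [IsSimpleModule A S] :
    ∃ (P : Type) (_ : AddCommGroup P) (_ : Module A P) (π : P →ₗ[A] S),
      Module.Projective A P ∧ IsUniserialModule A P ∧ Function.Surjective π := by
  have := IsSimpleModule.nontrivial A S
  obtain ⟨s, hs⟩ := exists_ne (0 : S)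
  let φ := LinearMap.toSpanSingleton A S s
  have hφ : ¬ (⊤ : Submodule A A) ≤ LinearMap.ker φ := fun h =>
    hs ((one_smul A s).symm.trans (h (x := 1) trivial))
  refine hA.submodule_fg_induction (motive := fun N => Module.Projective A N →
    ¬ N ≤ LinearMap.ker φ → _) (fun N _ hN hproj hNφ => ?_) (fun N₁ N₂ hd ih₁ ih₂ hproj hNφ => ?_)
    ⊤ Module.Finite.fg_top (.of_equiv Submodule.topEquiv.symm) hφ
  · refine ⟨N, inferInstance, inferInstance, φ ∘ₗ N.subtype, hproj, hN,
      LinearMap.surjective_of_ne_zero fun h => hNφ ?_⟩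
    rwa [← LinearMap.range_le_ker_iff, Submodule.range_subtype] at h
  · rw [sup_le_iff, not_and_or] at hNφ
    rcases hNφ with h | h
    · exact ih₁ (projective_of_projective_sup hd) h
    · rw [sup_comm] at hproj
      exact ih₂ (projective_of_projective_sup hd.symm) h

end Nakayama

section UniserialExtension

/-- A short exact sequence `0 → Z → E → V → 0` with uniserial middle term. For simple `Z` and `V`
over a Nakayama ring these turn out to be the almost split sequences ending in a simple module. -/
structure IsUniserialExtension {A Z E V : Type*} [Ring A] [AddCommGroup Z] [Module A Z]
    [AddCommGroup E] [Module A E] [AddCommGroup V] [Module A V] (f : Z →ₗ[A] E) (g : E →ₗ[A] V) :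
    Prop where
  isUniserialModule : IsUniserialModule A E
  injective : Function.Injective f
  surjective : Function.Surjective g
  exact : Function.Exact f g

namespace IsUniserialExtension

variable {A Z E V X P N : Type} [Ring A] [AddCommGroup Z] [Module A Z] [AddCommGroup E] [Module A E]
  [AddCommGroup V] [Module A V] [AddCommGroup X] [Module A X] [AddCommGroup P] [Module A P]
  [AddCommGroup N] [Module A N] {f : Z →ₗ[A] E} {g : E →ₗ[A] V}

theorem exists_of_exact {W Y : Type*} [AddCommGroup W] [Module A W] [AddCommGroup Y] [Module A Y]
    (hW : IsUniserialModule A W) {i : Y →ₗ[A] W} (hi : Function.Injective i) {d : W →ₗ[A] V}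
    (hd : Function.Surjective d) (hid : Function.Exact i d) {π : Y →ₗ[A] Z}
    (hπ : Function.Surjective π) :
    ∃ (f : Z →ₗ[A] W ⧸ (LinearMap.ker π).map i) (g : W ⧸ (LinearMap.ker π).map i →ₗ[A] V),
      IsUniserialExtension f g := by
  let L := (LinearMap.ker π).map i
  have hLi : LinearMap.ker (L.mkQ ∘ₗ i) = LinearMap.ker π := by
    rw [LinearMap.ker_comp, Submodule.ker_mkQ, Submodule.comap_map_eq_of_injective hi]
  obtain ⟨f, hf⟩ := exists_comp_eq_of_ker_le hπ hLi.ge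
  have hLd : L ≤ LinearMap.ker d := by
    rw [hid.linearMap_ker_eq]
    exact LinearMap.map_le_range
  have hfπ (y : Y) : f (π y) = L.mkQ (i y) := LinearMap.congr_fun hf y
  refine ⟨f, L.liftQ d hLd, hW.of_surjective L.mkQ_surjective, ?_, ?_, ?_⟩
  · refine (injective_iff_map_eq_zero f).2 fun z hz => ?_
    obtain ⟨y, rfl⟩ := hπ z
    exact hLi.le ((hfπ y).symm.trans hz)
  · exact fun v => (hd v).imp' L.mkQ fun w hw => hw
  · intro e
    obtain ⟨w, rfl⟩ := L.mkQ_surjective e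
    rw [L.mkQ_apply, Submodule.liftQ_apply, hid w]
    constructor
    · rintro ⟨y, rfl⟩
      exact ⟨π y, hfπ y⟩
    · rintro ⟨z, hz⟩
      obtain ⟨y, rfl⟩ := hπ z
      have hyw : i y - w ∈ L := (Submodule.Quotient.eq L).1 ((hfπ y).symm.trans hz)
      exact ((LinearMap.range i).sub_mem_iff_right ⟨y, rfl⟩).1 (LinearMap.map_le_range hyw)

variable [IsSimpleModule A Z] [IsSimpleModule A V]

theorem no_section (h : IsUniserialExtension f g) : ¬ ∃ s : V →ₗ[A] E, g ∘ₗ s = LinearMap.id := by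
  rintro ⟨s, hs⟩
  have hsurj : Function.Surjective s :=
    h.isUniserialModule.surjective_of_comp (f := g) (by rw [hs]; exact Function.surjective_id)
  have hginj : Function.Injective g :=
    (Function.RightInverse.leftInverse_of_surjective (f := s) (LinearMap.congr_fun hs)
      hsurj).injective
  have := IsSimpleModule.nontrivial A Z
  obtain ⟨z, hz⟩ := exists_ne (0 : Z)
  have hfz : f z = 0 := hginj (by rw [h.exact.apply_apply_eq_zero, map_zero])
  exact hz (h.injective (hfz.trans (map_zero f).symm))

theorem exists_lift_of_isUniserialModule (h : IsUniserialExtension f g) [Module.Projective A P]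
    (hP : IsUniserialModule A P) {π : P →ₗ[A] V} (hπ : Function.Surjective π)
    (hN : IsUniserialModule A N) {u : N →ₗ[A] V} (hu : ¬ ∃ s : V →ₗ[A] N, u ∘ₗ s = LinearMap.id) :
    ∃ k : N →ₗ[A] E, g ∘ₗ k = u := by
  rcases u.surjective_or_eq_zero with hus | rfl
  swap
  · exact ⟨0, LinearMap.comp_zero g⟩
  obtain ⟨p, hp⟩ := Module.projective_lifting_property u π hus
  obtain ⟨q, hq⟩ := Module.projective_lifting_property g π h.surjective
  have hps : Function.Surjective p := hN.surjective_of_comp (f := u) (by rwa [hp])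
  have hqs : Function.Surjective q :=
    h.isUniserialModule.surjective_of_comp (f := g) (by rwa [hq])
  by_cases hle : LinearMap.ker p ≤ LinearMap.ker q
  · obtain ⟨k, hk⟩ := exists_comp_eq_of_ker_le hps hle
    exact ⟨k, (LinearMap.cancel_right hps).1 (by rw [LinearMap.comp_assoc, hk, hq, hp])⟩
  obtain ⟨m, hm⟩ := exists_comp_eq_of_ker_le hqs ((hP _ _).resolve_left hle)
  have hum : u ∘ₗ m = g := by
    rw [← LinearMap.cancel_right hqs, LinearMap.comp_assoc, hm, hp, hq]
  have hmf : m ∘ₗ f = 0 := by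
    refine (m ∘ₗ f).injective_or_eq_zero.resolve_left fun hmf => hle fun x hx => ?_
    have hmq : m (q x) = 0 := by rwa [← hm] at hx
    obtain ⟨z, hz⟩ := (h.exact (q x)).1 (by rw [← hum, LinearMap.comp_apply, hmq, map_zero])
    have hz0 : z = 0 := hmf (by rw [LinearMap.comp_apply, hz, hmq, map_zero])
    rw [LinearMap.mem_ker, ← hz, hz0, map_zero]
  have hker : LinearMap.ker g ≤ LinearMap.ker m := by
    rw [h.exact.linearMap_ker_eq, LinearMap.range_le_ker_iff, hmf]
  obtain ⟨s, hs⟩ := exists_comp_eq_of_ker_le h.surjective hker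
  exact (hu ⟨s, (LinearMap.cancel_right h.surjective).1
    (by rw [LinearMap.comp_assoc, hs, hum, LinearMap.id_comp])⟩).elim

theorem exists_lift_of_fg [IsArtinianRing A] (hA : IsNakayama A) (h : IsUniserialExtension f g)
    {u : X →ₗ[A] V} (hu : ¬ ∃ s : V →ₗ[A] X, u ∘ₗ s = LinearMap.id) (N : Submodule A X)
    (hN : N.FG) : ∃ k : N →ₗ[A] E, g ∘ₗ k = u ∘ₗ N.subtype := by
  obtain ⟨P, _, _, π, _, hP, hπ⟩ := hA.exists_uniserial_projective V
  refine hA.submodule_fg_induction (motive := fun N => ∃ k : N →ₗ[A] E, g ∘ₗ k = u ∘ₗ N.subtype)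
    (fun N _ hN => ?_) ?_ N hN
  · exact h.exists_lift_of_isUniserialModule hP hπ hN fun ⟨s, hs⟩ => hu ⟨N.subtype ∘ₗ s, hs⟩
  · rintro N₁ N₂ hd ⟨k₁, hk₁⟩ ⟨k₂, hk₂⟩
    obtain ⟨k, rfl, rfl⟩ := exists_linearMap_on_sup hd k₁ k₂
    refine ⟨k, LinearMap.ext fun ⟨x, hx⟩ => ?_⟩
    obtain ⟨x₁, hx₁, x₂, hx₂, rfl⟩ := Submodule.mem_sup.1 hx
    have h₁ := LinearMap.congr_fun hk₁ ⟨x₁, hx₁⟩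
    have h₂ := LinearMap.congr_fun hk₂ ⟨x₂, hx₂⟩
    exact (map_add (g ∘ₗ k) ⟨x₁, _⟩ ⟨x₂, _⟩).trans
      ((congrArg₂ (· + ·) h₁ h₂).trans (map_add u x₁ x₂).symm)

/- Otherwise `p y` lies in the radical of a finitely generated `F ≤ ker u`. A lift of `u` to
`F + p(P)` kills `p y`, as it maps `F` into the simple kernel of `g`; on the other hand, composed
with `p` it has the same kernel as `q`. -/
theorem not_mem_jacobson_ker [IsArtinianRing A] (hA : IsNakayama A)
    (h : IsUniserialExtension f g) {u : X →ₗ[A] V} (hu : ¬ ∃ s : V →ₗ[A] X, u ∘ₗ s = LinearMap.id)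
    (hP : IsUniserialModule A P) {p : P →ₗ[A] X} {q : P →ₗ[A] E} (hpq : u ∘ₗ p = g ∘ₗ q)
    (hq : Function.Surjective q) {y : P} {x : LinearMap.ker u} (hx : (x : X) = p y)
    (hy : q y ≠ 0) : x ∉ Module.jacobson A (LinearMap.ker u) := by
  intro hrad
  obtain ⟨F, hF, x', hx', rfl⟩ := exists_fg_mem_jacobson hrad
  let N := F.map (LinearMap.ker u).subtype ⊔ LinearMap.range p
  let i : F →ₗ[A] N := ((LinearMap.ker u).subtype ∘ₗ F.subtype).codRestrict N fun z =>
    Submodule.mem_sup_left (Submodule.mem_map_of_mem z.2)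
  let p' : P →ₗ[A] N := p.codRestrict N fun z => Submodule.mem_sup_right ⟨z, rfl⟩
  have := h.isUniserialModule.finite
  have := hP.finite
  obtain ⟨k, hk⟩ := h.exists_lift_of_fg hA hu N
    ((hF.map _).sup (LinearMap.range_eq_map p ▸ Module.Finite.fg_top.map p))
  have hgk (z : N) : g (k z) = u z := LinearMap.congr_fun hk z
  have hky : k (p' y) = 0 := by
    obtain ⟨c, hc⟩ := exists_comp_eq_of_range_le (g := k ∘ₗ i) h.injective (by
      rw [← h.exact.linearMap_ker_eq, LinearMap.range_le_ker_iff]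
      exact LinearMap.ext fun z => (hgk (i z)).trans z.1.2)
    have hcx : c x' = 0 := IsSemisimpleModule.jacobson_le_ker A A _ _ c hx'
    have hix : p' y = i x' := Subtype.ext hx.symm
    rw [hix, ← LinearMap.comp_apply, ← hc, LinearMap.comp_apply, hcx, map_zero]
  have hgq : Function.Surjective (g ∘ₗ q) := h.surjective.comp hq
  have hkp : Function.Surjective (k ∘ₗ p') :=
    h.isUniserialModule.surjective_of_comp (f := g) (by
      rwa [← LinearMap.comp_assoc, hk, LinearMap.comp_assoc, LinearMap.subtype_comp_codRestrict,
        hpq])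
  exact hy ((hP.ker_eq_ker_of_surjective hkp hq).le hky)

theorem exists_lift_on_ker [IsArtinianRing A] (hA : IsNakayama A) (h : IsUniserialExtension f g)
    {u : X →ₗ[A] V} (hu : ¬ ∃ s : V →ₗ[A] X, u ∘ₗ s = LinearMap.id)
    (hP : IsUniserialModule A P) {p : P →ₗ[A] X} {q : P →ₗ[A] E} (hpq : u ∘ₗ p = g ∘ₗ q)
    (hq : Function.Surjective q) :
    ∃ r : LinearMap.ker u →ₗ[A] Z, ∀ y (x : LinearMap.ker u), p y = x → q y = f (r x) := by
  let W := LinearMap.ker (g ∘ₗ q)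
  have hW {y : P} : y ∈ W ↔ u (p y) = 0 := by
    rw [← LinearMap.comp_apply, hpq]
    rfl
  let p' : W →ₗ[A] LinearMap.ker u := (p ∘ₗ W.subtype).codRestrict _ fun y => hW.1 y.2
  obtain ⟨c, hc⟩ := exists_comp_eq_of_range_le (g := q ∘ₗ W.subtype) h.injective (by
    rw [← h.exact.linearMap_ker_eq, LinearMap.range_le_ker_iff]
    exact LinearMap.ext fun y => y.2)
  have hrad : ¬ LinearMap.range p' ≤ Module.jacobson A (LinearMap.ker u) := by
    have := IsSimpleModule.nontrivial A Z
    obtain ⟨z, hz⟩ := exists_ne (0 : Z)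
    obtain ⟨y, hy⟩ := hq (f z)
    have hyW : y ∈ W := (congrArg g hy).trans (h.exact.apply_apply_eq_zero z)
    have hqy : q y ≠ 0 := hy.trans_ne ((map_ne_zero_iff f h.injective).2 hz)
    exact fun hle => h.not_mem_jacobson_ker hA hu hP hpq hq (x := p' ⟨y, hyW⟩) rfl hqy
      (hle ⟨_, rfl⟩)
  obtain ⟨r, hr⟩ := exists_comp_eq_of_not_range_le_jacobson
    (hP.of_injective W.subtype_injective) hrad c
  refine ⟨r, fun y x hyx => ?_⟩
  have hy : y ∈ W := hW.2 (hyx ▸ x.2)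
  obtain rfl : p' ⟨y, hy⟩ = x := Subtype.ext hyx
  rw [← LinearMap.comp_apply r, hr, ← LinearMap.comp_apply f, hc]
  rfl

theorem exists_lift [IsArtinianRing A] (hA : IsNakayama A) (h : IsUniserialExtension f g)
    {u : X →ₗ[A] V} (hu : ¬ ∃ s : V →ₗ[A] X, u ∘ₗ s = LinearMap.id) :
    ∃ k : X →ₗ[A] E, g ∘ₗ k = u := by
  rcases u.surjective_or_eq_zero with hus | rfl
  swap
  · exact ⟨0, LinearMap.comp_zero g⟩
  obtain ⟨P, _, _, π, _, hP, hπ⟩ := hA.exists_uniserial_projective V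
  obtain ⟨p, hp⟩ := Module.projective_lifting_property u π hus
  obtain ⟨q, hq⟩ := Module.projective_lifting_property g π h.surjective
  have hpq : u ∘ₗ p = g ∘ₗ q := hp.trans hq.symm
  have hqs : Function.Surjective q :=
    h.isUniserialModule.surjective_of_comp (f := g) (by rwa [hq])
  obtain ⟨r, hr⟩ := h.exists_lift_on_ker hA hu hP hpq hqs
  have hcover (x : X) : ∃ y z, p y + (LinearMap.ker u).subtype z = x := by
    obtain ⟨y, hy⟩ := hπ (u x)
    rw [← hp] at hy
    exact ⟨y, ⟨x - p y, LinearMap.sub_mem_ker_iff.2 hy.symm⟩, add_sub_cancel _ _⟩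
  obtain ⟨k, hkp, hkr⟩ := exists_comp_eq_of_agree (r := f ∘ₗ r) hcover hr
  refine ⟨k, LinearMap.ext fun x => ?_⟩
  obtain ⟨y, z, rfl⟩ := hcover x
  have hky : k (p y) = q y := LinearMap.congr_fun hkp y
  have hkz : k z = f (r z) := LinearMap.congr_fun hkr z
  have hz : u z = 0 := z.2
  rw [LinearMap.comp_apply, Submodule.subtype_apply, map_add, map_add, map_add, hky, hkz, hz,
    h.exact.apply_apply_eq_zero, ← LinearMap.comp_apply g, ← hpq, LinearMap.comp_apply]

/- Lifting each of the two sequences over the other gives an endomorphism of `E` over `V`, which is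
an automorphism; hence `Z` is a direct summand of `N`. -/
theorem nonempty_linearEquiv [IsArtinianRing A] (hA : IsNakayama A) (h : IsUniserialExtension f g)
    {j : N →ₗ[A] X} {u : X →ₗ[A] V} (hj : Function.Injective j) (hju : Function.Exact j u)
    (hu : ¬ ∃ s : V →ₗ[A] X, u ∘ₗ s = LinearMap.id)
    (hN : ∀ N₁ N₂ : Submodule A N, IsCompl N₁ N₂ → N₁ = ⊥ ∨ N₂ = ⊥)
    {b : E →ₗ[A] X} (hb : u ∘ₗ b = g) : Nonempty (N ≃ₗ[A] Z) := by
  obtain ⟨a, ha⟩ := h.exists_lift hA hu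
  have hab : Function.Injective (a ∘ₗ b) := by
    have := h.isUniserialModule.finite
    refine IsNoetherian.injective_of_surjective_endomorphism _
      (h.isUniserialModule.surjective_of_comp (f := g) ?_)
    rw [← LinearMap.comp_assoc, ha, hb]
    exact h.surjective
  obtain ⟨a', ha'⟩ := exists_comp_eq_of_range_le (g := a ∘ₗ j) h.injective (by
    rw [← h.exact.linearMap_ker_eq, LinearMap.range_le_ker_iff, ← LinearMap.comp_assoc, ha,
      hju.linearMap_comp_eq_zero])
  obtain ⟨b', hb'⟩ := exists_comp_eq_of_range_le (g := b ∘ₗ f) hj (by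
    rw [← hju.linearMap_ker_eq, LinearMap.range_le_ker_iff, ← LinearMap.comp_assoc, hb,
      h.exact.linearMap_comp_eq_zero])
  have hab' : Function.Bijective (a' ∘ₗ b') := by
    have hcomp : f ∘ₗ (a' ∘ₗ b') = (a ∘ₗ b) ∘ₗ f := by
      rw [← LinearMap.comp_assoc, ha', LinearMap.comp_assoc, hb', LinearMap.comp_assoc]
    have hinj : Function.Injective (f ∘ₗ (a' ∘ₗ b')) := by
      rw [hcomp]
      exact hab.comp h.injective
    have := IsSimpleModule.nontrivial A Z
    exact LinearMap.bijective_of_ne_zero (LinearMap.ne_zero_of_injective (.of_comp hinj))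
  rcases hN _ _ (isCompl_range_ker_of_comp_bijective hab') with hbot | hbot
  · have := IsSimpleModule.nontrivial A Z
    exact (LinearMap.ne_zero_of_injective (f := b') (.of_comp hab'.1)
      (LinearMap.range_eq_bot.1 hbot)).elim
  · exact ⟨.ofBijective a' ⟨LinearMap.ker_eq_bot.1 hbot, .of_comp hab'.2⟩⟩

end IsUniserialExtension

end UniserialExtension

section TopSocle

variable {A : Type} [Ring A] {M M' T T' V : ModuleCat.{0} A}

theorem IsSimpleTopOf.nontrivial (h : IsSimpleTopOf A M T) : Nontrivial M := by
  obtain ⟨hT, f, hf, -⟩ := h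
  have := IsSimpleModule.nontrivial A T
  exact ((ModuleCat.epi_iff_surjective f).1 hf).nontrivial

theorem IsSimpleSocOf.nontrivial (h : IsSimpleSocOf A M V) : Nontrivial M := by
  obtain ⟨hV, f, hf, -⟩ := h
  have := IsSimpleModule.nontrivial A V
  exact ((ModuleCat.mono_iff_injective f).1 hf).nontrivial

theorem IsUniserialModule.isSimpleTopOf_iff (hM : IsUniserialModule A M) :
    IsSimpleTopOf A M T ↔
      IsSimpleModule A T ∧ ∃ π : M →ₗ[A] T, Function.Surjective π := by
  refine and_congr_right fun hT => ⟨fun ⟨f, hf, _⟩ => ⟨f.hom, ?_⟩, fun ⟨π, hπ⟩ =>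
    ⟨ModuleCat.ofHom π, (ModuleCat.epi_iff_surjective _).2 hπ, fun N g hg => ?_⟩⟩
  · exact (ModuleCat.epi_iff_surjective f).1 hf
  rw [ModuleCat.epi_iff_surjective] at hg ⊢
  exact hM.surjective_of_comp (f := π) hg

theorem IsUniserialModule.exists_isSimpleTopOf [IsArtinianRing A] (hM : IsUniserialModule A M)
    [Nontrivial M] : ∃ T, IsSimpleTopOf A M T := by
  obtain ⟨L, hL⟩ := exists_isCoatom (A := A) (M := M)
  exact ⟨ModuleCat.of A (M ⧸ L), hM.isSimpleTopOf_iff.2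
    ⟨isSimpleModule_iff_isCoatom.2 hL, L.mkQ, L.mkQ_surjective⟩⟩

theorem IsSimpleTopOf.iff_nonempty_iso (hM : IsUniserialModule A M) (h : IsSimpleTopOf A M T) :
    IsSimpleTopOf A M T' ↔ Nonempty (T ≅ T') := by
  obtain ⟨hT, π, hπ⟩ := hM.isSimpleTopOf_iff.1 h
  rw [hM.isSimpleTopOf_iff]
  constructor
  · rintro ⟨hT', π', hπ'⟩
    have hker := hM.ker_eq_ker_of_isSimpleModule hπ hπ'
    exact ⟨((π.quotKerEquivOfSurjective hπ).symm ≪≫ₗ Submodule.quotEquivOfEq _ _ hker ≪≫ₗ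
      π'.quotKerEquivOfSurjective hπ').toModuleIso⟩
  · rintro ⟨e⟩
    exact ⟨e.toLinearEquiv.isSimpleModule_iff.1 hT, e.toLinearEquiv.toLinearMap ∘ₗ π,
      e.toLinearEquiv.surjective.comp hπ⟩

theorem isSimpleTopOf_congr (hM : IsUniserialModule A M) (e : M ≅ M') :
    IsSimpleTopOf A M T ↔ IsSimpleTopOf A M' T := by
  have hM' : IsUniserialModule A M' := hM.of_injective e.symm.toLinearEquiv.injective
  rw [hM.isSimpleTopOf_iff, hM'.isSimpleTopOf_iff]
  exact and_congr_right fun _ =>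
    ⟨fun ⟨π, hπ⟩ => ⟨π ∘ₗ e.symm.toLinearEquiv.toLinearMap,
      hπ.comp e.symm.toLinearEquiv.surjective⟩,
    fun ⟨π, hπ⟩ => ⟨π ∘ₗ e.toLinearEquiv.toLinearMap, hπ.comp e.toLinearEquiv.surjective⟩⟩

theorem IsUniserialModule.range_le_of_ne_bot {M V : Type*} [AddCommGroup M] [Module A M]
    [AddCommGroup V] [Module A V] [IsSimpleModule A V] (hM : IsUniserialModule A M)
    {j : V →ₗ[A] M} (hj : Function.Injective j) {K : Submodule A M} (hK : K ≠ ⊥) :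
    LinearMap.range j ≤ K := by
  have hatom : IsAtom (LinearMap.range j) := isSimpleModule_iff_isAtom.1
    ((LinearEquiv.ofInjective j hj).isSimpleModule_iff.1 inferInstance)
  exact (hM _ _).elim id fun h => ((hatom.le_iff.1 h).resolve_left hK).ge

theorem IsUniserialModule.isSimpleSocOf_iff (hM : IsUniserialModule A M) :
    IsSimpleSocOf A M V ↔
      IsSimpleModule A V ∧ ∃ j : V →ₗ[A] M, Function.Injective j := by
  refine and_congr_right fun hV => ⟨fun ⟨f, hf, _⟩ => ⟨f.hom, ?_⟩, fun ⟨j, hj⟩ =>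
    ⟨ModuleCat.ofHom j, (ModuleCat.mono_iff_injective _).2 hj, fun N g hg => ?_⟩⟩
  · exact (ModuleCat.mono_iff_injective f).1 hf
  rw [ModuleCat.mono_iff_injective] at hg ⊢
  have hgj : Function.Injective (g.hom ∘ₗ j) := hg
  have := IsSimpleModule.nontrivial A V
  rw [← LinearMap.ker_eq_bot]
  by_contra hker
  exact LinearMap.ne_zero_of_injective hgj
    (LinearMap.range_le_ker_iff.1 (hM.range_le_of_ne_bot hj hker))

theorem IsUniserialModule.exists_isSimpleSocOf [IsArtinianRing A] (hM : IsUniserialModule A M)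
    [Nontrivial M] : ∃ V, IsSimpleSocOf A M V := by
  have := hM.finite
  obtain ⟨V, hV⟩ := IsAtomic.exists_atom (Submodule A M)
  exact ⟨ModuleCat.of A V, hM.isSimpleSocOf_iff.2
    ⟨isSimpleModule_iff_isAtom.2 hV, V.subtype, V.injective_subtype⟩⟩

theorem IsSimpleSocOf.exists_range_le (h : IsSimpleSocOf A M V) :
    ∃ j : V →ₗ[A] M, Function.Injective j ∧
      ∀ K : Submodule A M, K ≠ ⊥ → LinearMap.range j ≤ K := by
  obtain ⟨hV, f, hf, hess⟩ := h
  refine ⟨f.hom, (ModuleCat.mono_iff_injective f).1 hf, fun K hK => ?_⟩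
  have hcomp : ¬ Function.Injective (K.mkQ ∘ₗ f.hom) := fun h => hK <| by
    have := hess _ (ModuleCat.ofHom K.mkQ) ((ModuleCat.mono_iff_injective _).2 h)
    rw [← K.ker_mkQ]
    exact LinearMap.ker_eq_bot.2 ((ModuleCat.mono_iff_injective _).1 this)
  have hzero := (LinearMap.injective_or_eq_zero _).resolve_left hcomp
  rwa [← LinearMap.range_le_ker_iff, K.ker_mkQ] at hzero

theorem IsSimpleSocOf.isUniserialModule (hA : IsNakayama A) (h : IsSimpleSocOf A M V) :
    IsUniserialModule A M := by
  have hV := h.1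
  have := IsSimpleModule.nontrivial A V
  obtain ⟨j, hj, hle⟩ := h.exists_range_le
  have hinf {K₁ K₂ : Submodule A M} (h₁ : K₁ ≠ ⊥) (h₂ : K₂ ≠ ⊥) : K₁ ⊓ K₂ ≠ ⊥ := fun hbot =>
    LinearMap.ne_zero_of_injective hj
      (LinearMap.range_eq_bot.1 (le_bot_iff.1 (hbot ▸ le_inf (hle _ h₁) (hle _ h₂))))
  refine .of_fg fun F hF => ?_
  rcases subsingleton_or_nontrivial F with _ | _
  · exact fun N₁ N₂ => Or.inl (Subsingleton.elim N₁ N₂).le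
  refine hA (ModuleCat.of A F) (Module.Finite.iff_fg.2 hF) ⟨‹_›, fun N₁ N₂ hc => ?_⟩
  have hmap {N : Submodule A F} (hN : N ≠ ⊥) : N.map F.subtype ≠ ⊥ := fun h =>
    hN (Submodule.map_injective_of_injective F.injective_subtype
      (h.trans (Submodule.map_bot _).symm))
  by_contra! hne
  exact hinf (hmap hne.1) (hmap hne.2)
    (Submodule.disjoint_map F.subtype_injective hc.disjoint).eq_bot

end TopSocle

section Syzygy

variable {A : Type} [Ring A] {M M' P P' X S I J : ModuleCat.{0} A} {n : ℕ} {x y : ℕ∞}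

theorem IsProjCoverOf.nonempty_iso (h : IsProjCoverOf A M P) (h' : IsProjCoverOf A M P') :
    Nonempty (P ≅ P') := by
  obtain ⟨f, hP, hf, hess⟩ := h
  obtain ⟨f', hP', hf', hess'⟩ := h'
  let a : P ⟶ P' := Projective.factorThru f f'
  have haf : a ≫ f' = f := Projective.factorThru_comp f f'
  have : Epi a := hess' _ a (by rwa [haf])
  let s : P' ⟶ P := Projective.factorThru (𝟙 P') a
  have hsa : s ≫ a = 𝟙 P' := Projective.factorThru_comp _ _
  have : Epi s := hess _ s (by rwa [← haf, ← Category.assoc, hsa, Category.id_comp])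
  have := IsSplitMono.mk' (⟨a, hsa⟩ : SplitMono s)
  exact ⟨(@asIso _ _ _ _ s (isIso_of_epi_of_isSplitMono s)).symm⟩

theorem IsInjEnvOf.nonempty_iso (h : IsInjEnvOf A M I) (h' : IsInjEnvOf A M J) :
    Nonempty (I ≅ J) := by
  obtain ⟨f, hI, hf, hess⟩ := h
  obtain ⟨f', hJ, hf', hess'⟩ := h'
  let a : I ⟶ J := Injective.factorThru f' f
  have hfa : f ≫ a = f' := Injective.comp_factorThru f' f
  have : Mono a := hess _ a (by rwa [hfa])
  let s : J ⟶ I := Injective.factorThru (𝟙 I) a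
  have has : a ≫ s = 𝟙 I := Injective.comp_factorThru _ _
  have : Mono s := hess' _ s (by rwa [← hfa, Category.assoc, has, Category.comp_id])
  have := IsSplitEpi.mk' (⟨a, has⟩ : SplitEpi s)
  exact ⟨(@asIso _ _ _ _ s (isIso_of_mono_of_isSplitEpi s)).symm⟩

theorem IsInjEnvOf.isSimpleSocOf (h : IsInjEnvOf A S I) (hS : IsSimpleModule A S) :
    IsSimpleSocOf A I S :=
  h.elim fun f hf => ⟨hS, f, hf.2⟩

theorem ProjDimLE.of_iso (h : ProjDimLE A n M) (e : M ≅ M') : ProjDimLE A n M' := by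
  induction h generalizing M' with
  | zero M hM => exact .zero M' (Projective.of_iso e hM)
  | succ n M P f hP hf _ ih =>
    exact .succ n M' P (f ≫ e.hom) hP (epi_comp _ _) (ih (kernelCompMono f e.hom).symm)

theorem projDim_congr (e : M ≅ M') : projDim A M = projDim A M' := by
  have hiff (n : ℕ) : ProjDimLE A n M ↔ ProjDimLE A n M' :=
    ⟨fun h => h.of_iso e, fun h => h.of_iso e.symm⟩
  simp only [projDim, hiff]

theorem ERelVal.le_projDim (h : ERelVal A S x) : x ≤ projDim A S := by
  obtain ⟨I, -, rfl⟩ := h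
  exact min_le_left _ _

theorem ERelVal.le_projDim_of_isInjEnvOf (h : ERelVal A S x) (hI : IsInjEnvOf A S I) :
    x ≤ projDim A I := by
  obtain ⟨J, hJ, rfl⟩ := h
  obtain ⟨e⟩ := hJ.nonempty_iso hI
  rw [← projDim_congr e]
  exact min_le_right _ _

theorem ERelVal.unique (hx : ERelVal A S x) (hy : ERelVal A S y) : x = y := by
  obtain ⟨I, hI, rfl⟩ := hx
  obtain ⟨J, hJ, rfl⟩ := hy
  obtain ⟨e⟩ := hI.nonempty_iso hJ
  rw [projDim_congr e]

theorem IsSyzygyOf.exists_projectiveCover (h : IsSyzygyOf A M X) :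
    ∃ (P : ModuleCat.{0} A) (f : P ⟶ M) (i : X →ₗ[A] P), IsProjectiveCoverHom A f ∧
      Function.Injective i ∧ Function.Exact i f.hom := by
  obtain ⟨P, f, hf, ⟨e⟩⟩ := h
  let e' : X ≃ₗ[A] LinearMap.ker f.hom := (e ≪≫ ModuleCat.kernelIsoKer f).toLinearEquiv
  refine ⟨P, f, (LinearMap.ker f.hom).subtype ∘ₗ e'.toLinearMap, hf,
    Subtype.val_injective.comp e'.injective, LinearMap.exact_iff.2 ?_⟩
  rw [LinearMap.range_comp_of_range_eq_top _ e'.range, Submodule.range_subtype]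

theorem IsSyzygyOf.nontrivial [Nontrivial X] (h : IsSyzygyOf A M X) : Nontrivial M := by
  obtain ⟨P, f, i, ⟨-, -, hess⟩, hi, -⟩ := h.exists_projectiveCover
  have := hi.nontrivial
  by_contra hM
  rw [not_nontrivial_iff_subsingleton] at hM
  have hepi := hess P 0 ((ModuleCat.epi_iff_surjective _).2 fun m => ⟨0, Subsingleton.elim _ _⟩)
  obtain ⟨p, hp⟩ := exists_ne (0 : P)
  obtain ⟨p', rfl⟩ := (ModuleCat.epi_iff_surjective _).1 hepi p
  exact hp rfl

theorem IsNthSyzygy.nontrivial [Nontrivial X] (h : IsNthSyzygy A n M X) : Nontrivial M := by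
  induction n generalizing M with
  | zero =>
    obtain ⟨e⟩ := h
    exact e.symm.toLinearEquiv.surjective.nontrivial
  | succ n ih =>
    obtain ⟨Y, hY, hX⟩ := h
    have := ih hX
    exact hY.nontrivial

theorem IsNthSyzygy.projDimLE [Subsingleton X] (h : IsNthSyzygy A (n + 1) M X) :
    ProjDimLE A n M := by
  induction n generalizing M with
  | zero =>
    obtain ⟨Y, hY, ⟨e⟩⟩ := h
    obtain ⟨P, f, i, hf, -, hexact⟩ := hY.exists_projectiveCover
    have : Subsingleton Y := e.toLinearEquiv.surjective.subsingleton
    have hinj : Function.Injective f.hom := by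
      rw [← LinearMap.ker_eq_bot, hexact.linearMap_ker_eq, Subsingleton.elim i 0,
        LinearMap.range_zero]
    let e' : P ≃ₗ[A] M :=
      .ofBijective f.hom ⟨hinj, (ModuleCat.epi_iff_surjective f).1 hf.2.1⟩
    exact .zero M (Projective.of_iso e'.toModuleIso hf.1)
  | succ n ih =>
    obtain ⟨Y, ⟨P, f, hf, ⟨e⟩⟩, hX⟩ := h
    exact .succ n M P f hf.1 hf.2.1 ((ih hX).of_iso e)

theorem IsNthSyzygy.nontrivial_of_le_projDim [Nontrivial M] (h : IsNthSyzygy A n M X)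
    (hn : n ≤ projDim A M) : Nontrivial X := by
  by_contra hX
  rw [not_nontrivial_iff_subsingleton] at hX
  cases n with
  | zero =>
    obtain ⟨e⟩ := h
    exact not_subsingleton M e.toLinearEquiv.surjective.subsingleton
  | succ n =>
    have hle : projDim A M ≤ n := sInf_le ⟨n, rfl, h.projDimLE⟩
    exact n.not_succ_le_self (ENat.natCast_le_natCast.1 (hn.trans hle))

end Syzygy

section NakayamaSyzygy

variable {A : Type} [Ring A] [IsArtinianRing A] {M P X : ModuleCat.{0} A} {n : ℕ}

theorem IsUniserialModule.isProjectiveCoverHom (hP : IsUniserialModule A P) [Projective P]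
    [Nontrivial M] {f : P →ₗ[A] M} (hf : Function.Surjective f) :
    IsProjectiveCoverHom A (ModuleCat.ofHom f) := by
  refine ⟨‹_›, (ModuleCat.epi_iff_surjective _).2 hf, fun N g hg => ?_⟩
  obtain ⟨L, hL⟩ := exists_isCoatom (A := A) (M := M)
  have := isSimpleModule_iff_isCoatom.2 hL
  rw [ModuleCat.epi_iff_surjective] at hg ⊢
  exact hP.surjective_of_comp (f := L.mkQ ∘ₗ f) (L.mkQ_surjective.comp hg)

theorem IsUniserialModule.exists_isProjCoverOf (hA : IsNakayama A) (hM : IsUniserialModule A M) :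
    ∃ P : ModuleCat.{0} A, IsProjCoverOf A M P ∧ IsUniserialModule A P := by
  rcases subsingleton_or_nontrivial M with _ | _
  · have : Module.Projective A M := .of_free
    exact ⟨M, ⟨𝟙 M, (IsProjective.iff_projective M).1 this, inferInstance, fun N g hg => by
      rwa [Category.comp_id] at hg⟩, hM⟩
  obtain ⟨T, hT⟩ := hM.exists_isSimpleTopOf
  obtain ⟨hT, π, hπ⟩ := hM.isSimpleTopOf_iff.1 hT
  obtain ⟨P, _, _, p, hproj, hP, hp⟩ := hA.exists_uniserial_projective T
  obtain ⟨f, hf⟩ := Module.projective_lifting_property π p hπ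
  have := (IsProjective.iff_projective P).1 hproj
  exact ⟨ModuleCat.of A P, ⟨ModuleCat.ofHom f, hP.isProjectiveCoverHom (P := ModuleCat.of A P)
    (hM.surjective_of_comp (f := π) (by rwa [hf]))⟩, hP⟩

theorem IsProjCoverOf.isUniserialModule (hA : IsNakayama A) (h : IsProjCoverOf A M P)
    (hM : IsUniserialModule A M) : IsUniserialModule A P := by
  obtain ⟨P', h', hP'⟩ := hM.exists_isProjCoverOf hA
  obtain ⟨e⟩ := h.nonempty_iso h'
  exact hP'.of_injective e.toLinearEquiv.injective

theorem IsSyzygyOf.isUniserialModule (hA : IsNakayama A) (h : IsSyzygyOf A M X)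
    (hM : IsUniserialModule A M) : IsUniserialModule A X := by
  obtain ⟨P, f, i, hf, hi, -⟩ := h.exists_projectiveCover
  exact (IsProjCoverOf.isUniserialModule hA ⟨f, hf⟩ hM).of_injective hi

theorem IsUniserialModule.exists_isNthSyzygy (hA : IsNakayama A) (hM : IsUniserialModule A M) :
    ∃ X, IsNthSyzygy A n M X := by
  induction n generalizing M with
  | zero => exact ⟨M, ⟨Iso.refl M⟩⟩
  | succ n ih =>
    obtain ⟨P, ⟨f, hf⟩, -⟩ := hM.exists_isProjCoverOf hA
    have hY : IsSyzygyOf A M (kernel f) := ⟨P, f, hf, ⟨Iso.refl _⟩⟩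
    obtain ⟨X, hX⟩ := ih (hY.isUniserialModule hA hM)
    exact ⟨X, kernel f, hY, hX⟩

end NakayamaSyzygy

section Tau

variable {A : Type} [Ring A]

theorem exists_section_iff {X V : ModuleCat.{0} A} {u : X ⟶ V} :
    (∃ s : V ⟶ X, s ≫ u = 𝟙 V) ↔ ∃ s : V →ₗ[A] X, u.hom ∘ₗ s = LinearMap.id :=
  ⟨fun ⟨s, hs⟩ => ⟨s.hom, congrArg ModuleCat.Hom.hom hs⟩,
    fun ⟨s, hs⟩ => ⟨ModuleCat.ofHom s, ModuleCat.hom_ext hs⟩⟩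

theorem indec_of_isSimpleModule {M : ModuleCat.{0} A} [IsSimpleModule A M] : Indec A M :=
  ⟨IsSimpleModule.nontrivial A M, fun N₁ _ h =>
    (eq_bot_or_eq_top N₁).imp_right fun h₁ => eq_bot_of_top_isCompl (by rwa [h₁] at h)⟩

variable [IsArtinianRing A]

theorem IsUniserialExtension.isAlmostSplitSeq (hA : IsNakayama A) {Z E V : ModuleCat.{0} A}
    [IsSimpleModule A Z] [IsSimpleModule A V] {f : Z ⟶ E} {g : E ⟶ V}
    (h : IsUniserialExtension f.hom g.hom) : IsAlmostSplitSeq A f g := by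
  refine ⟨(ModuleCat.mono_iff_injective f).2 h.injective,
    (ModuleCat.epi_iff_surjective g).2 h.surjective,
    ⟨ModuleCat.hom_ext h.exact.linearMap_comp_eq_zero, ?_⟩, exists_section_iff.not.2 h.no_section,
    indec_of_isSimpleModule, indec_of_isSimpleModule, fun X u hu => ?_⟩
  · exact (ShortComplex.moduleCat_exact_iff_range_eq_ker _).2 h.exact.linearMap_ker_eq.symm
  · obtain ⟨k, hk⟩ := h.exists_lift hA (exists_section_iff.not.1 hu)
    exact ⟨ModuleCat.ofHom k, ModuleCat.hom_ext hk⟩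

theorem isTauOf_iff_isSimpleTopOf (hA : IsNakayama A) {W : Type} [AddCommGroup W] [Module A W]
    {N V Y : ModuleCat.{0} A} [IsSimpleModule A V] [Nontrivial Y] (hW : IsUniserialModule A W)
    {i : Y →ₗ[A] W} (hi : Function.Injective i) {d : W →ₗ[A] V} (hd : Function.Surjective d)
    (hid : Function.Exact i d) : IsTauOf A N V ↔ IsSimpleTopOf A Y N := by
  have hY := hW.of_injective hi
  constructor
  · rintro ⟨X, j, u, hj, -, ⟨w, hju⟩, hu, hN, -, hlift⟩
    obtain ⟨T, hT⟩ := hY.exists_isSimpleTopOf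
    obtain ⟨_, π, hπ⟩ := hY.isSimpleTopOf_iff.1 hT
    obtain ⟨f, g, h⟩ := IsUniserialExtension.exists_of_exact hW hi hd hid hπ
    obtain ⟨b, hb⟩ := hlift _ (ModuleCat.ofHom g) (exists_section_iff.not.2 h.no_section)
    rw [ShortComplex.moduleCat_exact_iff_range_eq_ker] at hju
    obtain ⟨e⟩ := h.nonempty_linearEquiv hA (j := j.hom) ((ModuleCat.mono_iff_injective j).1 hj)
      (LinearMap.exact_iff.2 hju.symm) (exists_section_iff.not.1 hu) hN.2
      (congrArg ModuleCat.Hom.hom hb)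
    exact (hT.iff_nonempty_iso hY).2 ⟨e.symm.toModuleIso⟩
  · intro hN
    obtain ⟨_, π, hπ⟩ := hY.isSimpleTopOf_iff.1 hN
    obtain ⟨f, g, h⟩ := IsUniserialExtension.exists_of_exact hW hi hd hid hπ
    exact ⟨_, ModuleCat.ofHom f, ModuleCat.ofHom g, h.isAlmostSplitSeq hA⟩

theorem isTauOf_iff_isSimpleTopOf_of_range_le (hA : IsNakayama A) {P Q V Y Z : ModuleCat.{0} A}
    [IsSimpleModule A V] [Nontrivial Y] (hQ : IsUniserialModule A Q) {i : Y →ₗ[A] Q}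
    (hi : Function.Injective i) {ψ : Q →ₗ[A] P} (hiψ : Function.Exact i ψ) {j : V →ₗ[A] P}
    (hj : Function.Injective j) (hjψ : LinearMap.range j ≤ LinearMap.range ψ) :
    IsTauOf A Z V ↔ IsSimpleTopOf A Y Z := by
  let W := (LinearMap.range j).comap ψ
  let i' : Y →ₗ[A] W := i.codRestrict W fun y => ⟨0, by
    rw [hiψ.apply_apply_eq_zero, map_zero]⟩
  obtain ⟨d, hd⟩ := exists_comp_eq_of_range_le (g := ψ ∘ₗ W.subtype) hj (by
    rintro _ ⟨w, rfl⟩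
    exact w.2)
  have hjd (w : W) : j (d w) = ψ w := LinearMap.congr_fun hd w
  refine isTauOf_iff_isSimpleTopOf hA (hQ.of_injective W.subtype_injective) (i := i') (d := d)
    (fun y₁ y₂ h => hi (congrArg Subtype.val h)) (fun v => ?_) fun w => ?_
  · obtain ⟨q, hq⟩ := hjψ ⟨v, rfl⟩
    exact ⟨⟨q, v, hq.symm⟩, hj ((hjd _).trans hq)⟩
  · rw [← map_eq_zero_iff j hj, hjd, hiψ w]
    exact ⟨fun ⟨y, hy⟩ => ⟨y, Subtype.ext hy⟩, fun ⟨y, hy⟩ => ⟨y, congrArg Subtype.val hy⟩⟩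

end Tau

section Gamma

variable {A : Type} [Ring A] {M P S T U X Y Y' Z : ModuleCat.{0} A}

theorem IsProjCoverOf.isGammaOf_iff (hP : IsUniserialModule A P) (h : IsProjCoverOf A U P) :
    IsGammaOf A U Z ↔ ∃ V, IsSimpleSocOf A P V ∧ IsTauOf A Z V := by
  refine ⟨fun ⟨P', h', V, hV, hZ⟩ => ⟨V, ?_, hZ⟩, fun hV => ⟨P, h, hV⟩⟩
  obtain ⟨e⟩ := h'.nonempty_iso h
  obtain ⟨j, hj, -⟩ := hV.exists_range_le
  exact hP.isSimpleSocOf_iff.2 ⟨hV.1, e.toLinearEquiv.toLinearMap ∘ₗ j,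
    e.toLinearEquiv.injective.comp hj⟩

variable [IsArtinianRing A]

theorem IsSyzygyOf.isTauOf_iff (hA : IsNakayama A) [IsSimpleModule A S] [Nontrivial Y]
    (h : IsSyzygyOf A S Y) : IsTauOf A U S ↔ IsSimpleTopOf A Y U := by
  obtain ⟨P, f, i, hf, hi, hexact⟩ := h.exists_projectiveCover
  exact isTauOf_iff_isSimpleTopOf hA
    (IsProjCoverOf.isUniserialModule hA ⟨f, hf⟩ .of_isSimpleModule) hi
    ((ModuleCat.epi_iff_surjective f).1 hf.2.1) hexact

/- If `P` covers `M`, it covers `U` too, and `soc P` lies in the syzygy `Y` of `M`. The preimage of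
`soc P` in the projective cover of `Y` is an extension of `soc P` by the second syzygy `Y'`. -/
theorem IsSyzygyOf.isGammaOf_iff (hA : IsNakayama A) (hM : IsUniserialModule A M)
    (hU : IsSimpleTopOf A M U) (hY : IsSyzygyOf A M Y) (hY' : IsSyzygyOf A Y Y') [Nontrivial Y'] :
    IsGammaOf A U Z ↔ IsSimpleTopOf A Y' Z := by
  obtain ⟨P, f, i, hf, hi, -⟩ := hY.exists_projectiveCover
  obtain ⟨Q, f', i', hf', hi', hexact⟩ := hY'.exists_projectiveCover
  have hP : IsUniserialModule A P := IsProjCoverOf.isUniserialModule hA ⟨f, hf⟩ hM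
  have hQ : IsUniserialModule A Q :=
    IsProjCoverOf.isUniserialModule hA ⟨f', hf'⟩ (hY.isUniserialModule hA hM)
  obtain ⟨hUs, π, hπ⟩ := hM.isSimpleTopOf_iff.1 hU
  have hPU : IsProjCoverOf A U P := by
    have := IsSimpleModule.nontrivial A U
    have := hf.1
    exact ⟨_, hP.isProjectiveCoverHom (f := π ∘ₗ f.hom)
      (hπ.comp ((ModuleCat.epi_iff_surjective f).1 hf.2.1))⟩
  have := hY'.nontrivial
  have := hi.nontrivial
  have hf's := (ModuleCat.epi_iff_surjective f').1 hf'.2.1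
  have htau {V : ModuleCat.{0} A} (hV : IsSimpleSocOf A P V) :
      IsTauOf A Z V ↔ IsSimpleTopOf A Y' Z := by
    have := hV.1
    obtain ⟨j, hj, hle⟩ := hV.exists_range_le
    refine isTauOf_iff_isSimpleTopOf_of_range_le hA hQ hi' (ψ := i ∘ₗ f'.hom)
      (hexact.comp_injective i hi (map_zero i)) hj (hle _ fun h => ?_)
    rw [LinearMap.range_comp_of_range_eq_top _ (LinearMap.range_eq_top.2 hf's)] at h
    exact LinearMap.ne_zero_of_injective hi (LinearMap.range_eq_bot.1 h)
  rw [hPU.isGammaOf_iff hP]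
  refine ⟨fun ⟨V, hV, hZ⟩ => (htau hV).1 hZ, fun hZ => ?_⟩
  obtain ⟨V, hV⟩ := hP.exists_isSimpleSocOf
  exact ⟨V, hV, (htau hV).2 hZ⟩

theorem IsNthSyzygy.iterRel_isGammaOf_iff (hA : IsNakayama A) {t : ℕ} (hM : IsUniserialModule A M)
    (hU : IsSimpleTopOf A M U) (hX : IsNthSyzygy A (2 * t) M X) [Nontrivial X] :
    IterRel A (IsGammaOf A) t U T ↔ IsSimpleTopOf A X T := by
  induction t generalizing M U with
  | zero =>
    obtain ⟨e⟩ := hX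
    rw [← isSimpleTopOf_congr hM e.symm, hU.iff_nonempty_iso hM]
    rfl
  | succ t ih =>
    obtain ⟨Y, hY, Y', hY', hX⟩ := hX
    have hY'u := hY'.isUniserialModule hA (hY.isUniserialModule hA hM)
    have := hX.nontrivial
    have hgamma {Z : ModuleCat.{0} A} := hY.isGammaOf_iff (Z := Z) hA hM hU hY'
    constructor
    · rintro ⟨Z, hZ, hT⟩
      exact (ih hY'u (hgamma.1 hZ) hX).1 hT
    · intro hT
      obtain ⟨Z, hZ⟩ := hY'u.exists_isSimpleTopOf
      exact ⟨Z, hgamma.2 hZ, (ih hY'u hZ hX).2 hT⟩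

end Gamma

section HomologicalPermutation

variable {A : Type} [Ring A] {S T : ModuleCat.{0} A} {z : ℕ}

theorem ERelVal.hRel_iff (h : ERelVal A S z) (hS : IsSimpleModule A S) :
    HRel A S T ↔ ∃ N, ((Odd z ∧ N = S) ∨ (Even z ∧ IsInjEnvOf A S N)) ∧
      ∃ X, IsNthSyzygy A z N X ∧ IsSimpleTopOf A X T := by
  constructor
  · rintro ⟨-, -, z', hz', hN⟩
    obtain rfl : z' = z := ENat.natCast_inj.1 (hz'.unique h)
    exact hN
  · rintro ⟨N, hN, X, hX, hT⟩
    exact ⟨hS, hT.1, z, h, N, hN, X, hX, hT⟩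

variable [IsArtinianRing A]

theorem ERelVal.hRel_iff_isPhiOf (hA : IsNakayama A) (hS : IsSimpleModule A S) {t : ℕ}
    (h : ERelVal A S (2 * t : ℕ)) :
    HRel A S T ↔ ∃ U, IsPhiOf A S U ∧ IterRel A (IsGammaOf A) t U T := by
  have hI {I : ModuleCat.{0} A} (hI : IsInjEnvOf A S I) : IsUniserialModule A I ∧ Nontrivial I :=
    ⟨(hI.isSimpleSocOf hS).isUniserialModule hA, (hI.isSimpleSocOf hS).nontrivial⟩
  rw [h.hRel_iff hS]
  constructor
  · rintro ⟨I, hodd | ⟨-, hSI⟩, X, hX, hT⟩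
    · exact (Nat.not_odd_iff_even.2 (even_two_mul t) hodd.1).elim
    obtain ⟨hIu, _⟩ := hI hSI
    have := hT.nontrivial
    obtain ⟨U, hU⟩ := hIu.exists_isSimpleTopOf
    exact ⟨U, ⟨I, hSI, hU⟩, (hX.iterRel_isGammaOf_iff hA hIu hU).2 hT⟩
  · rintro ⟨U, ⟨I, hSI, hU⟩, hUT⟩
    obtain ⟨hIu, _⟩ := hI hSI
    obtain ⟨X, hX⟩ := hIu.exists_isNthSyzygy hA
    have := hX.nontrivial_of_le_projDim (h.le_projDim_of_isInjEnvOf hSI)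
    exact ⟨I, .inr ⟨even_two_mul t, hSI⟩, X, hX, (hX.iterRel_isGammaOf_iff hA hIu hU).1 hUT⟩

theorem ERelVal.hRel_iff_isTauOf (hA : IsNakayama A) (hS : IsSimpleModule A S) {t : ℕ}
    (h : ERelVal A S (2 * t + 1 : ℕ)) :
    HRel A S T ↔ ∃ U, IsTauOf A U S ∧ IterRel A (IsGammaOf A) t U T := by
  have hSu : IsUniserialModule A S := .of_isSimpleModule
  rw [h.hRel_iff hS]
  constructor
  · rintro ⟨N, ⟨-, rfl⟩ | heven, X, ⟨Y, hY, hX⟩, hT⟩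
    swap
    · exact (Nat.not_even_iff_odd.2 (odd_two_mul_add_one t) heven.1).elim
    have := hT.nontrivial
    have := hX.nontrivial
    have hYu := hY.isUniserialModule hA hSu
    obtain ⟨U, hU⟩ := hYu.exists_isSimpleTopOf
    exact ⟨U, (hY.isTauOf_iff hA).2 hU, (hX.iterRel_isGammaOf_iff hA hYu hU).2 hT⟩
  · rintro ⟨U, hU, hUT⟩
    obtain ⟨X, Y, hY, hX⟩ := hSu.exists_isNthSyzygy (n := 2 * t + 1) hA
    have := IsSimpleModule.nontrivial A S
    have := IsNthSyzygy.nontrivial_of_le_projDim (n := 2 * t + 1) ⟨Y, hY, hX⟩ h.le_projDim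
    have := hX.nontrivial
    have hYu := hY.isUniserialModule hA hSu
    rw [hY.isTauOf_iff hA] at hU
    exact ⟨S, .inl ⟨odd_two_mul_add_one t, rfl⟩, X, ⟨Y, hY, hX⟩,
      (hX.iterRel_isGammaOf_iff hA hYu hU).1 hUT⟩

end HomologicalPermutation

end ArtinAlg

open ArtinAlg in
theorem statement_18_general (A : Type) [Ring A] [IsArtinianRing A] (hNak : IsNakayama A)
    (S T : ModuleCat.{0} A) (hS : IsSimpleModule A S) (t : ℕ) :
    (ERelVal A S ((2 * t : ℕ) : ℕ∞) →
      (HRel A S T ↔ ∃ U, IsPhiOf A S U ∧ IterRel A (IsGammaOf A) t U T)) ∧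
    (ERelVal A S ((2 * t + 1 : ℕ) : ℕ∞) →
      (HRel A S T ↔ ∃ U, IsTauOf A U S ∧ IterRel A (IsGammaOf A) t U T)) :=
  ⟨fun h => h.hRel_iff_isPhiOf hNak hS, fun h => h.hRel_iff_isTauOf hNak hS⟩

open ArtinAlg in
/-- Let `A` be a Nakayama algebra and `S` a simple module. If
`e(S) = 2t`, then `h(S) = γ^t (φ S)` with `φ S = top (I S)`; if `e(S) = 2t + 1`, then
`h(S) = γ^t (τ S)`. -/
theorem statement_18 (R : Type) [CommRing R] [IsArtinianRing R]
    (A : Type) [Ring A] [Algebra R A] [Module.Finite R A]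
    (hNak : IsNakayama A)
    (S T : ModuleCat.{0} A) (hS : IsSimpleModule A ↥S) (t : ℕ) :
    (ERelVal A S ((2 * t : ℕ) : ℕ∞) →
      (HRel A S T ↔ ∃ U, IsPhiOf A S U ∧ IterRel A (IsGammaOf A) t U T)) ∧
    (ERelVal A S ((2 * t + 1 : ℕ) : ℕ∞) →
      (HRel A S T ↔ ∃ U, IsTauOf A U S ∧ IterRel A (IsGammaOf A) t U T)) := by
  have := IsArtinianRing.of_finite R A
  exact statement_18_general A hNak S T hS t
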